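/- arXiv:1103.3923 — 2 statements merged into one kernel-verified Lean document; each statement's English description precedes it below -/
import Mathlib

section
/- Let C be a monoidal category, L : C → D a localization functor at a class W of morphisms, and suppose that for every w : X → Y in W and every object Z, the morphisms w ⊗ id_Z and id_Z ⊗ w are in W. Then D inherits a monoidal structure making L a monoidal functor, and this structure is unique up to monoidal equivalence. -/
open CategoryTheory MonoidalCategory

/-- If `L : C ⥤ D` is a localization at `W` and `W` is stable under whiskering by any
object, then `D` inherits a monoidal structure making `L` monoidal, uniquely up to a
monoidal equivalence compatible with `L`. -/
theorem localization_monoidal_exists_unique {C : Type*} {D : Type*} [Category C]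
    [Category D] [MonoidalCategory C] (W : MorphismProperty C)
    (hW : ∀ {X Y : C} (w : X ⟶ Y), W w → ∀ Z : C, W (w ▷ Z) ∧ W (Z ◁ w))
    (L : C ⥤ D) [L.IsLocalization W] :
    (∃ m : MonoidalCategory D, Nonempty (@Functor.Monoidal C _ _ D _ m L)) ∧
      ∀ (m₁ m₂ : MonoidalCategory D),
        @Functor.Monoidal C _ _ D _ m₁ L → @Functor.Monoidal C _ _ D _ m₂ L →
          ∃ e : D ≌ D,
            Nonempty (@Functor.Monoidal D _ m₁ D _ m₂ e.functor) ∧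
              Nonempty (L ⋙ e.functor ≅ L) := by
  -- replace `W` by its multiplicative closure
  have hmon : W.multiplicativeClosure.IsMonoidal :=
    { whiskerLeft := fun X Y₁ Y₂ g hg => by
        induction hg with
        | of f hf => exact .of _ (hW f hf X).2
        | id x => rw [MonoidalCategory.whiskerLeft_id]; exact .id _
        | comp_of f g hf hg ih =>
          rw [MonoidalCategory.whiskerLeft_comp]
          exact .comp_of _ _ ih (hW g hg X).2
      whiskerRight := fun f hf Y => by
        induction hf with
        | of f hf => exact .of _ (hW f hf Y).1
        | id x => rw [MonoidalCategory.id_whiskerRight]; exact .id _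
        | comp_of f g hf hg ih =>
          rw [MonoidalCategory.comp_whiskerRight]
          exact .comp_of _ _ ih (hW g hg Y).1 }
  have hinv : W.multiplicativeClosure.IsInvertedBy L := by
    intro X Y f hf
    induction hf with
    | of f hf => exact Localization.inverts L W f hf
    | id x => infer_instance
    | comp_of f g hf hg ih =>
      have := Localization.inverts L W g hg
      rw [L.map_comp]
      infer_instance
  have hloc : L.IsLocalization W.multiplicativeClosure :=
    Functor.IsLocalization.of_equivalence_source L W L W.multiplicativeClosure
      CategoryTheory.Equivalence.refl
      (fun _ _ f hf => MorphismProperty.le_isoClosure _ _ (.of f hf)) hinv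
      (Functor.leftUnitor L)
  refine ⟨?_, ?_⟩
  · exact ⟨(inferInstance : MonoidalCategory
        (LocalizedMonoidal L W.multiplicativeClosure (Iso.refl (L.obj (𝟙_ C))))),
      ⟨(inferInstance : (Localization.Monoidal.toMonoidalCategory L W.multiplicativeClosure
        (Iso.refl (L.obj (𝟙_ C)))).Monoidal)⟩⟩
  · intro m₁ m₂ h₁ h₂
    refine ⟨CategoryTheory.Equivalence.refl, ⟨?_⟩, ⟨Functor.rightUnitor L⟩⟩
    letI : Localization.Lifting L W.multiplicativeClosure L (𝟭 D) := ⟨Functor.rightUnitor L⟩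
    exact @Localization.Monoidal.functorMonoidalOfComp C D D _ _ _ _ m₁ m₂ L
      W.multiplicativeClosure _ h₁ (𝟭 D) L h₂ _ _
end

section
/- Let C be a cocomplete symmetric monoidal closed category, S a set of objects of C, and let L : C → C_S be the reflective localization at the class of S-local equivalences. If for every S-local equivalence f and every object Z the morphism f ⊗ id_Z is again an S-local equivalence, then C_S inherits a symmetric monoidal structure with L strong symmetric monoidal, given by X ⊗_S Y := L(X ⊗ Y). -/
open CategoryTheory MonoidalCategory Limits

namespace Retensoring

universe v u

variable {A : Type u} [Category.{v} A] [MonoidalCategory A]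

/-- A type synonym for `A`, whose tensor product on objects is `t`. -/
def Re (t : A → A → A) (_ : ∀ X Y, t X Y ≅ X ⊗ Y) : Type u := A

variable (t : A → A → A) (θ : ∀ X Y, t X Y ≅ X ⊗ Y)

instance : Category.{v} (Re t θ) := inferInstanceAs (Category.{v} A)

/-- The identity functor, as a functor from the synonym. -/
def U : Re t θ ⥤ A := 𝟭 A

/-- The identity functor, as a functor to the synonym. -/
def G : A ⥤ Re t θ := 𝟭 A

instance : (U t θ).Faithful := inferInstanceAs (𝟭 A).Faithful

instance : MonoidalCategoryStruct (Re t θ) where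
  tensorObj X Y := t X Y
  whiskerLeft X Y₁ Y₂ f := ((θ X Y₁).hom ≫ (MonoidalCategoryStruct.whiskerLeft (C := A) X f) ≫
    (θ X Y₂).inv : t X Y₁ ⟶ t X Y₂)
  whiskerRight {X₁ X₂} f Y := ((θ X₁ Y).hom ≫
    (MonoidalCategoryStruct.whiskerRight (C := A) f Y) ≫ (θ X₂ Y).inv : t X₁ Y ⟶ t X₂ Y)
  tensorHom {X₁ Y₁ X₂ Y₂} f g := ((θ X₁ X₂).hom ≫
    (MonoidalCategoryStruct.tensorHom (C := A) f g) ≫ (θ Y₁ Y₂).inv : t X₁ X₂ ⟶ t Y₁ Y₂)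
  tensorUnit := 𝟙_ A
  associator X Y Z := (((θ (t X Y) Z) ≪≫ (θ X Y ⊗ᵢ Iso.refl Z)) ≪≫
    MonoidalCategoryStruct.associator (C := A) X Y Z ≪≫
    (Iso.refl X ⊗ᵢ (θ Y Z).symm) ≪≫ (θ X (t Y Z)).symm : t (t X Y) Z ≅ t X (t Y Z))
  leftUnitor X := ((θ (𝟙_ A) X) ≪≫ MonoidalCategoryStruct.leftUnitor (C := A) X : t (𝟙_ A) X ≅ X)
  rightUnitor X := ((θ X (𝟙_ A)) ≪≫ MonoidalCategoryStruct.rightUnitor (C := A) X :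
    t X (𝟙_ A) ≅ X)

lemma aux_left (X : A) : (θ (𝟙_ A) X).hom ≫ (λ_ X).hom =
    ((θ (𝟙_ A) X).hom ≫ (𝟙 (𝟙_ A) ⊗ₘ 𝟙 X)) ≫ (λ_ X).hom := by simp

lemma aux_right (X : A) : (θ X (𝟙_ A)).hom ≫ (ρ_ X).hom =
    ((θ X (𝟙_ A)).hom ≫ (𝟙 X ⊗ₘ 𝟙 (𝟙_ A))) ≫ (ρ_ X).hom := by simp

/-- The data inducing the monoidal structure. -/
def data : Monoidal.InducingFunctorData (U t θ) where
  μIso X Y := (θ X Y).symm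
  εIso := Iso.refl (𝟙_ A)
  whiskerLeft_eq _ _ _ _ := rfl
  whiskerRight_eq _ _ := rfl
  tensorHom_eq _ _ := rfl
  associator_eq _ _ _ := rfl
  leftUnitor_eq X := aux_left t θ X
  rightUnitor_eq X := aux_right t θ X

instance : MonoidalCategory (Re t θ) := Monoidal.induced (U t θ) (data t θ)

instance : (U t θ).Monoidal := Monoidal.fromInducedMonoidal (U t θ) (data t θ)

lemma μ_U (X Y : Re t θ) : Functor.LaxMonoidal.μ (U t θ) X Y = (θ X Y).inv := rfl

/-- The braiding on the synonym. -/
def br [BraidedCategory A] (X Y : Re t θ) : X ⊗ Y ≅ Y ⊗ X :=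
  ((θ X Y) ≪≫ BraidedCategory.braiding (C := A) X Y ≪≫ (θ Y X).symm : t X Y ≅ t Y X)

instance [BraidedCategory A] : BraidedCategory (Re t θ) :=
  .ofFaithful (U t θ) (br t θ) fun X Y ↦ by
    change (θ X Y).inv ≫ (θ X Y).hom ≫ (BraidedCategory.braiding (C := A) X Y).hom ≫
      (θ Y X).inv = (BraidedCategory.braiding (C := A) X Y).hom ≫ (θ Y X).inv
    simp

instance [BraidedCategory A] : (U t θ).Braided where
  braided X Y := by
    change (θ X Y).inv ≫ (θ X Y).hom ≫ (BraidedCategory.braiding (C := A) X Y).hom ≫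
      (θ Y X).inv = (BraidedCategory.braiding (C := A) X Y).hom ≫ (θ Y X).inv
    simp

instance [SymmetricCategory A] : SymmetricCategory (Re t θ) :=
  .ofFaithful (U t θ)

/-- The functor to the synonym is monoidal. -/
def coreG : (G t θ).CoreMonoidal where
  εIso := Iso.refl (𝟙_ A)
  μIso X Y := (θ X Y : t X Y ≅ _)
  μIso_hom_natural_left {X Y} f X' := by
    change ((θ X X').hom ≫ f ▷ X' ≫ (θ Y X').inv) ≫ (θ Y X').hom = (θ X X').hom ≫ f ▷ X'
    simp
  μIso_hom_natural_right {X Y} X' f := by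
    change ((θ X' X).hom ≫ X' ◁ f ≫ (θ X' Y).inv) ≫ (θ X' Y).hom = (θ X' X).hom ≫ X' ◁ f
    simp
  associativity X Y Z := by
    change ((θ (t X Y) Z).hom ≫ (θ X Y).hom ▷ Z ≫ (θ (X ⊗ Y) Z).inv) ≫ (θ (X ⊗ Y) Z).hom ≫
        (α_ X Y Z).hom =
      (((θ (t X Y) Z).hom ≫ ((θ X Y).hom ⊗ₘ 𝟙 Z)) ≫ (α_ X Y Z).hom ≫
        (𝟙 X ⊗ₘ (θ Y Z).inv) ≫ (θ X (t Y Z)).inv) ≫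
        ((θ X (t Y Z)).hom ≫ X ◁ (θ Y Z).hom ≫ (θ X (Y ⊗ Z)).inv) ≫ (θ X (Y ⊗ Z)).hom
    simp
  left_unitality X := by
    change (θ (𝟙_ A) X).hom ≫ (λ_ X).hom =
      ((θ (𝟙_ A) X).hom ≫ 𝟙 (𝟙_ A) ▷ X ≫ (θ (𝟙_ A) X).inv) ≫ (θ (𝟙_ A) X).hom ≫ (λ_ X).hom
    simp
  right_unitality X := by
    change (θ X (𝟙_ A)).hom ≫ (ρ_ X).hom =
      ((θ X (𝟙_ A)).hom ≫ X ◁ 𝟙 (𝟙_ A) ≫ (θ X (𝟙_ A)).inv) ≫ (θ X (𝟙_ A)).hom ≫ (ρ_ X).hom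
    simp

instance : (G t θ).Monoidal := (coreG t θ).toMonoidal

instance [BraidedCategory A] : (G t θ).Braided where
  braided X Y := by
    change (θ X Y).hom ≫ (β_ X Y).hom = ((θ X Y).hom ≫ (β_ X Y).hom ≫ (θ Y X).inv) ≫ (θ Y X).hom
    simp

end Retensoring

/-- A reflective localization of a cocomplete closed symmetric monoidal category at a class
of local equivalences stable under tensoring inherits a symmetric monoidal structure with
tensor product `X ⊗_S Y = L(X ⊗ Y)` and `L` strong symmetric monoidal. -/
theorem reflective_localization_symmetricMonoidal {C : Type*} {D : Type*} [Category C]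
    [Category D] [MonoidalCategory C] [SymmetricCategory C] [MonoidalClosed C]
    [HasColimits C] (ι : D ⥤ C) [Reflective ι]
    (hstable : ∀ {X Y : C} (f : X ⟶ Y),
      (∀ Z : D, Function.Bijective fun g : Y ⟶ ι.obj Z => f ≫ g) →
        ∀ Z : C, ∀ Z' : D,
          Function.Bijective fun g : Y ⊗ Z ⟶ ι.obj Z' => (f ▷ Z) ≫ g) :
    ∃ (m : MonoidalCategory D) (s : @SymmetricCategory D _ m),
      Nonempty (@Functor.Braided C _ _ _ D _ m s.toBraidedCategory (reflector ι)) ∧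
        ∀ X Y : D,
          @MonoidalCategoryStruct.tensorObj D _ m.toMonoidalCategoryStruct X Y =
            (reflector ι).obj (ι.obj X ⊗ ι.obj Y) := by
  let P : ObjectProperty C := (· ∈ Set.range ι.obj)
  let W : MorphismProperty C := P.isLocal
  have hR : ∀ {X Y : C} (f : X ⟶ Y), W f → ∀ Z : C, W (f ▷ Z) := by
    rintro X Y f hf Z _ ⟨Z', rfl⟩
    exact hstable f (fun Z'' => hf _ ⟨Z'', rfl⟩) Z Z'
  have hmul : W.IsMultiplicative := inferInstanceAs P.isLocal.IsMultiplicative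
  have hmon : W.IsMonoidal :=
    { whiskerLeft := fun X Y₁ Y₂ g hg => by
        have h : X ◁ g = (β_ X Y₁).hom ≫ g ▷ X ≫ (β_ Y₂ X).hom := by simp
        rw [h]
        exact W.comp_mem _ _ (ObjectProperty.isLocal_of_isIso P _)
          (W.comp_mem _ _ (hR g hg X) (ObjectProperty.isLocal_of_isIso P _))
      whiskerRight := fun f hf Y => hR f hf Y }
  have hloc : (reflector ι).IsLocalization W :=
    ObjectProperty.isLocalization_isLocal (reflectorAdjunction ι)
  let ε : (reflector ι).obj (𝟙_ C) ≅ (reflector ι).obj (𝟙_ C) := Iso.refl _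
  let A := LocalizedMonoidal (reflector ι) W ε
  let L' : C ⥤ A := Localization.Monoidal.toMonoidalCategory (reflector ι) W ε
  let t : A → A → A := fun X Y => (reflector ι).obj (ι.obj X ⊗ ι.obj Y)
  let c : ∀ X : A, L'.obj (ι.obj X) ≅ X := fun X =>
    (asIso (reflectorAdjunction ι).counit).app X
  let θ : ∀ X Y : A, t X Y ≅ X ⊗ Y := fun X Y =>
    (Localization.Monoidal.μ (reflector ι) W ε (ι.obj X) (ι.obj Y)).symm ≪≫ (c X ⊗ᵢ c Y)
  exact ⟨(inferInstance : MonoidalCategory (Retensoring.Re t θ)),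
    (inferInstance : SymmetricCategory (Retensoring.Re t θ)),
    ⟨(inferInstance : Functor.Braided (L' ⋙ Retensoring.G t θ))⟩, fun _ _ => rfl⟩
end
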